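/- Let n ≥ 1 and let f be a continuous map from the unit n-sphere S^n ⊆ ℝ^{n+1} to ℝ^n. Then f is not injective: there exist points x, y ∈ S^n with x ≠ y and f(x) = f(y). -/

import Mathlib

/-!
If `f` were injective on the boundary `S` of a ball in a larger-dimensional space, its inverse would
extend to the lower-dimensional target, and a smooth perturbation of that extension, having a null
range, would miss a given point. Composed with an extension of `f`, it gives a map of the ball
missing its centre although it is close to the identity on `S`. This is excluded by the surjectivity
of maps `id + u` with `u` continuous of compact support (equivalent to Brouwer's theorem).

For `u` of class `C¹` supported in `B`, the surjectivity follows the Milnor–Rogers argument: for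
small `t` the map `id + t u` is a bijection of `B` of positive Jacobian, so
`∫_B det (1 + t Du) φ(x + t u) = ∫_B φ`. When `φ` is a polynomial in a squared Euclidean distance to
`y`, the left side is polynomial in `t`, so the identity persists at `t = 1`; by Weierstrass it then
holds for every continuous function of that distance. If `id + u` misses `y ∈ B`, a bump at `y`
makes the left side zero and the right side positive.
-/

open Filter Function MeasureTheory Metric Module Polynomial Set Topology

section PolynomialDependence

theorem exists_eval_eq_sum_mul_eval {𝕜 : Type*} [Field 𝕜] {S : Set 𝕜} (hS : S.Infinite) (D : ℕ)
    (a : 𝕜) : ∃ (s : Finset 𝕜) (w : 𝕜 → 𝕜), ↑s ⊆ S ∧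
      ∀ P : 𝕜[X], P.natDegree ≤ D → P.eval a = ∑ t ∈ s, w t * P.eval t := by
  classical
  obtain ⟨s, hsS, hcard⟩ := hS.exists_subset_card_eq (D + 1)
  refine ⟨s, fun t ↦ (Lagrange.basis s id t).eval a, hsS, fun P hP ↦ ?_⟩
  have hdeg : P.degree < s.card :=
    P.degree_le_natDegree.trans_lt (by rw [hcard]; exact_mod_cast Nat.lt_succ_of_le hP)
  conv_lhs => rw [Lagrange.eq_interpolate injective_id.injOn hdeg, Lagrange.interpolate_apply,
    eval_finsetSum]
  simp only [id_eq, eval_mul, eval_C, mul_comm]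

theorem integral_eq_of_infinite_of_polynomial {α : Type*} [MeasurableSpace α] {μ : Measure α}
    {F : ℝ → α → ℝ} {D : ℕ}
    (hpoly : ∀ x, ∃ P : ℝ[X], P.natDegree ≤ D ∧ ∀ t, P.eval t = F t x)
    (hint : ∀ t, Integrable (F t) μ) {c : ℝ} (hc : {t | ∫ x, F t x ∂μ = c}.Infinite) (t : ℝ) :
    ∫ x, F t x ∂μ = c := by
  obtain ⟨s, w, hs, hw⟩ := exists_eval_eq_sum_mul_eval hc D t
  have hsum : ∑ r ∈ s, w r = 1 := by simpa using (hw 1 (by simp)).symm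
  have hF (x : α) : F t x = ∑ r ∈ s, w r * F r x := by
    obtain ⟨P, hPD, hP⟩ := hpoly x
    simpa only [hP] using hw P hPD
  calc ∫ x, F t x ∂μ
      = ∑ r ∈ s, w r * ∫ x, F r x ∂μ := by
        simp_rw [hF]
        rw [integral_finsetSum _ fun r _ ↦ (hint r).const_mul _]
        simp_rw [integral_const_mul]
    _ = ∑ r ∈ s, w r * c := Finset.sum_congr rfl fun r hr ↦ by rw [hs hr]
    _ = c := by rw [← Finset.sum_mul, hsum, one_mul]

theorem exists_polynomial_eval_eq_det_id_add_smul {R M : Type*} [CommRing R] [Nontrivial R]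
    [AddCommGroup M] [Module R M] [Module.Free R M] [Module.Finite R M] (A : M →ₗ[R] M) :
    ∃ P : R[X], P.natDegree ≤ finrank R M ∧ ∀ t, P.eval t = (LinearMap.id + t • A).det := by
  classical
  let b := Free.chooseBasis R M
  let N := LinearMap.toMatrix b b A
  refine ⟨((X : R[X]) • N.map C + (1 : Matrix _ _ R).map C).det, ?_, fun t ↦ ?_⟩
  · rw [finrank_eq_card_chooseBasisIndex]
    exact natDegree_det_X_add_C_le N 1
  · have hN : LinearMap.toMatrix b b (LinearMap.id + t • A) = 1 + t • N := by
      rw [map_add, map_smul, LinearMap.toMatrix_id]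
    rw [← LinearMap.det_toMatrix b, hN, ← coe_evalRingHom, RingHom.map_det]
    congr 1
    ext i j
    simp [Matrix.one_apply, apply_ite, add_comm, mul_comm t]

theorem exists_polynomial_eval_eq_norm_add_smul_sq {H : Type*} [NormedAddCommGroup H]
    [InnerProductSpace ℝ H] (v w : H) :
    ∃ Q : ℝ[X], Q.natDegree ≤ 2 ∧ ∀ t, Q.eval t = ‖v + t • w‖ ^ 2 := by
  refine ⟨C (‖w‖ ^ 2) * X ^ 2 + C (2 * inner ℝ v w) * X + C (‖v‖ ^ 2),
    natDegree_quadratic_le, fun t ↦ ?_⟩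
  rw [norm_add_sq_real, inner_smul_right, norm_smul, mul_pow, Real.norm_eq_abs, sq_abs]
  simp only [eval_add, eval_mul, eval_pow, eval_C, eval_X]
  ring

end PolynomialDependence

section Weierstrass

variable {X : Type*} [TopologicalSpace X] [MeasurableSpace X] [OpensMeasurableSpace X]
  {μ : Measure X} [IsFiniteMeasureOnCompacts μ] {B : Set X} {a b g h : X → ℝ}

theorem dist_setIntegral_mul_le_of_forall_dist_le (hB : IsCompact B) (hBm : MeasurableSet B)
    (ha : ContinuousOn a B) (hg : ContinuousOn g B) (hh : ContinuousOn h B) {ε : ℝ}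
    (hgh : ∀ x ∈ B, dist (g x) (h x) ≤ ε) :
    dist (∫ x in B, a x * g x ∂μ) (∫ x in B, a x * h x ∂μ) ≤ ε * ∫ x in B, |a x| ∂μ := by
  have hint {k : X → ℝ} (hk : ContinuousOn k B) : IntegrableOn (fun x ↦ a x * k x) B μ :=
    (ha.mul hk).integrableOn_compact' hB hBm
  rw [dist_eq_norm, ← integral_sub (hint hg) (hint hh), ← integral_const_mul]
  have habs : IntegrableOn (fun x ↦ |a x|) B μ := ha.abs.integrableOn_compact' hB hBm
  refine norm_integral_le_of_norm_le (habs.const_mul ε) ?_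
  filter_upwards [ae_restrict_mem hBm] with x hx
  rw [← mul_sub, norm_mul, mul_comm]
  exact mul_le_mul_of_nonneg_right (hgh x hx) (norm_nonneg _)

theorem setIntegral_mul_comp_eq_of_forall_polynomial (hB : IsCompact B) (hBm : MeasurableSet B)
    (ha : ContinuousOn a B) (hb : ContinuousOn b B) (hg : ContinuousOn g B) (hh : ContinuousOn h B)
    (hpoly : ∀ p : ℝ[X], ∫ x in B, a x * p.eval (g x) ∂μ = ∫ x in B, b x * p.eval (h x) ∂μ)
    {q : ℝ → ℝ} (hq : Continuous q) :
    ∫ x in B, a x * q (g x) ∂μ = ∫ x in B, b x * q (h x) ∂μ := by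
  obtain ⟨R, hR⟩ := ((hB.image_of_continuousOn hg).union
    (hB.image_of_continuousOn hh)).isBounded.subset_closedBall 0
  rw [Real.closedBall_eq_Icc] at hR
  set K := (∫ x in B, |a x| ∂μ) + ∫ x in B, |b x| ∂μ
  have hclose (ε : ℝ) (hε : 0 < ε) :
      dist (∫ x in B, a x * q (g x) ∂μ) (∫ x in B, b x * q (h x) ∂μ) ≤ ε * K := by
    obtain ⟨p, hp⟩ := exists_polynomial_near_of_continuousOn _ _ q hq.continuousOn ε hε
    have hpg (x) (hx : x ∈ B) : dist (q (g x)) (p.eval (g x)) ≤ ε := by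
      rw [dist_comm]; exact (hp _ (hR (.inl (mem_image_of_mem g hx)))).le
    have hph (x) (hx : x ∈ B) : dist (p.eval (h x)) (q (h x)) ≤ ε :=
      (hp _ (hR (.inr (mem_image_of_mem h hx)))).le
    calc dist (∫ x in B, a x * q (g x) ∂μ) (∫ x in B, b x * q (h x) ∂μ)
        ≤ dist (∫ x in B, a x * q (g x) ∂μ) (∫ x in B, a x * p.eval (g x) ∂μ)
          + dist (∫ x in B, b x * p.eval (h x) ∂μ) (∫ x in B, b x * q (h x) ∂μ) := by
          rw [← hpoly p]; exact dist_triangle _ _ _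
      _ ≤ ε * (∫ x in B, |a x| ∂μ) + ε * ∫ x in B, |b x| ∂μ := add_le_add
          (dist_setIntegral_mul_le_of_forall_dist_le hB hBm ha (hq.comp_continuousOn hg)
            (p.continuous.comp_continuousOn hg) hpg)
          (dist_setIntegral_mul_le_of_forall_dist_le hB hBm hb (p.continuous.comp_continuousOn hh)
            (hq.comp_continuousOn hh) hph)
      _ = ε * K := (mul_add ..).symm
  have hlim : Tendsto (fun ε : ℝ ↦ ε * K) (𝓝[>] 0) (𝓝 0) := by
    simpa using (tendsto_id.mul_const K).mono_left (nhdsWithin_le_nhds (a := (0 : ℝ)))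
  exact dist_le_zero.1 (ge_of_tendsto hlim (eventually_mem_nhdsWithin.mono hclose))

end Weierstrass

section Contraction

variable {E : Type*} [NormedAddCommGroup E] {u : E → E} {K : NNReal}

theorem bijective_id_add_of_lipschitzWith [CompleteSpace E] (hu : LipschitzWith K u) (hK : K < 1) :
    Bijective fun x ↦ x + u x := by
  refine ⟨(AntilipschitzWith.id.add_lipschitzWith hu (by simpa using hK)).injective, fun y ↦ ?_⟩
  have hcontr : ContractingWith K fun x ↦ y - u x :=
    ⟨hK, LipschitzWith.of_dist_le_mul fun x z ↦ by
      simpa only [dist_sub_left] using hu.dist_le_mul x z⟩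
  exact ⟨hcontr.fixedPoint, eq_sub_iff_add_eq.1 hcontr.fixedPoint_isFixedPt.symm⟩

theorem image_eq_of_bijective_of_eqOn_compl {α : Type*} {g : α → α} {B : Set α} (hg : Bijective g)
    (hB : EqOn g id Bᶜ) : g '' B = B := by
  rw [← compl_inj_iff, ← image_compl_eq hg, hB.image_eq, image_id]

variable [NormedSpace ℝ E] [FiniteDimensional ℝ E]

theorem det_id_add_pos_of_norm_lt_one {A : E →L[ℝ] E} (hA : ‖A‖ < 1) :
    0 < (ContinuousLinearMap.id ℝ E + A).det := by
  have hcont : Continuous fun t : ℝ ↦ (ContinuousLinearMap.id ℝ E + t • A).det :=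
    ContinuousLinearMap.continuous_det.comp (by fun_prop)
  have hne (t : ℝ) (ht : t ∈ Icc 0 1) : (ContinuousLinearMap.id ℝ E + t • A).det ≠ 0 := by
    have hnorm : ‖-(t • A)‖ < 1 := by
      rw [norm_neg, norm_smul, Real.norm_of_nonneg ht.1]
      exact (mul_le_of_le_one_left (norm_nonneg A) ht.2).trans_lt hA
    have hunit := (isUnit_one_sub_of_norm_lt_one hnorm).map ContinuousLinearMap.toLinearMapRingHom
    rw [sub_neg_eq_add] at hunit
    exact (LinearMap.isUnit_det _ hunit).ne_zero
  by_contra! hdet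
  obtain ⟨t, ht, ht0⟩ := intermediate_value_Icc' zero_le_one hcont.continuousOn
    (show (0 : ℝ) ∈ _ from ⟨by simpa using hdet, by simp [ContinuousLinearMap.det]⟩)
  exact hne t ht ht0

variable [MeasurableSpace E] [BorelSpace E] (μ : Measure E) [μ.IsAddHaarMeasure]
  {F : Type*} [NormedAddCommGroup F] [NormedSpace ℝ F] {B : Set E}

theorem setIntegral_det_smul_comp_id_add_of_lipschitzWith (hu : Differentiable ℝ u)
    (huK : LipschitzWith K u) (hK : K < 1) (hB : MeasurableSet B) (huB : ∀ x ∉ B, u x = 0)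
    (φ : E → F) :
    ∫ x in B, (ContinuousLinearMap.id ℝ E + fderiv ℝ u x).det • φ (x + u x) ∂μ
      = ∫ x in B, φ x ∂μ := by
  have hbij := bijective_id_add_of_lipschitzWith huK hK
  have himage : (fun x ↦ x + u x) '' B = B :=
    image_eq_of_bijective_of_eqOn_compl hbij fun x hx ↦ by simp [huB x hx]
  have hderiv (x) (_ : x ∈ B) : HasFDerivWithinAt (fun x ↦ x + u x)
      (ContinuousLinearMap.id ℝ E + fderiv ℝ u x) B x :=
    ((hasFDerivAt_id x).add (hu x).hasFDerivAt).hasFDerivWithinAt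
  have hdet (x : E) : 0 < (ContinuousLinearMap.id ℝ E + fderiv ℝ u x).det :=
    det_id_add_pos_of_norm_lt_one ((norm_fderiv_le_of_lipschitz ℝ huK).trans_lt hK)
  conv_rhs => rw [← himage,
    integral_image_eq_integral_abs_det_fderiv_smul μ hB hderiv hbij.injective.injOn φ]
  simp only [abs_of_pos (hdet _)]

theorem eventually_setIntegral_det_smul_comp_id_add_smul (hu : ContDiff ℝ 1 u)
    (hc : HasCompactSupport u) (hB : MeasurableSet B) (huB : ∀ x ∉ B, u x = 0) (φ : E → F) :
    ∀ᶠ t : ℝ in 𝓝 0,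
      ∫ x in B, (ContinuousLinearMap.id ℝ E + t • fderiv ℝ u x).det • φ (x + t • u x) ∂μ
        = ∫ x in B, φ x ∂μ := by
  obtain ⟨K, hK⟩ := hu.lipschitzWith_of_hasCompactSupport hc one_ne_zero
  have hsmall : ∀ᶠ t : ℝ in 𝓝 0, ‖t‖₊ * K < 1 := by
    have hcont : Continuous fun t : ℝ ↦ ‖t‖₊ * K := by fun_prop
    exact hcont.continuousAt.eventually_lt_const (by simp)
  filter_upwards [hsmall] with t ht
  have hd := hu.differentiable one_ne_zero
  have h := setIntegral_det_smul_comp_id_add_of_lipschitzWith μ (hd.const_smul t)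
    ((lipschitzWith_smul t).comp hK) ht hB (fun x hx ↦ by simp [huB x hx]) φ
  simpa only [Pi.smul_apply, fderiv_const_smul (hd _)] using h

end Contraction

section AveragingIdentity

variable {E : Type*} [NormedAddCommGroup E] [NormedSpace ℝ E] {u : E → E}

theorem continuous_det_id_add_smul_fderiv (hu : ContDiff ℝ 1 u) (t : ℝ) :
    Continuous fun x ↦ (ContinuousLinearMap.id ℝ E + t • fderiv ℝ u x).det :=
  ContinuousLinearMap.continuous_det.comp
    (continuous_const.add ((hu.continuous_fderiv one_ne_zero).const_smul t))

variable [FiniteDimensional ℝ E]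

theorem continuous_euclideanDist {X : Type*} [TopologicalSpace X] {f g : X → E}
    (hf : Continuous f) (hg : Continuous g) : Continuous fun x ↦ Euclidean.dist (f x) (g x) := by
  unfold Euclidean.dist
  fun_prop

theorem exists_polynomial_eval_eq_det_mul_eval_euclideanDist (A : E →L[ℝ] E) (x v y : E)
    (p : ℝ[X]) : ∃ P : ℝ[X], P.natDegree ≤ finrank ℝ E + p.natDegree * 2 ∧ ∀ t : ℝ, P.eval t =
      (ContinuousLinearMap.id ℝ E + t • A).det * p.eval (Euclidean.dist (x + t • v) y ^ 2) := by
  obtain ⟨P, hPdeg, hP⟩ := exists_polynomial_eval_eq_det_id_add_smul (A : E →ₗ[ℝ] E)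
  obtain ⟨Q, hQdeg, hQ⟩ :=
    exists_polynomial_eval_eq_norm_add_smul_sq (toEuclidean (x - y)) (toEuclidean v)
  refine ⟨P * p.comp Q, natDegree_mul_le.trans (add_le_add hPdeg ?_), fun t ↦ ?_⟩
  · exact natDegree_comp_le.trans (Nat.mul_le_mul_left _ hQdeg)
  · have hdist : Euclidean.dist (x + t • v) y = ‖toEuclidean (x - y) + t • toEuclidean v‖ := by
      rw [Euclidean.dist, dist_eq_norm, ← map_smul, ← map_add, ← map_sub, add_sub_right_comm]
    rw [eval_mul, eval_comp, hP, hQ, hdist]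
    rfl

variable [MeasurableSpace E] [BorelSpace E] (μ : Measure E) [μ.IsAddHaarMeasure] {B : Set E}

theorem setIntegral_det_mul_eval_euclideanDist (hu : ContDiff ℝ 1 u) (hc : HasCompactSupport u)
    (hB : IsCompact B) (huB : ∀ x ∉ B, u x = 0) (y : E) (p : ℝ[X]) (t : ℝ) :
    ∫ x in B, (ContinuousLinearMap.id ℝ E + t • fderiv ℝ u x).det *
        p.eval (Euclidean.dist (x + t • u x) y ^ 2) ∂μ
      = ∫ x in B, p.eval (Euclidean.dist x y ^ 2) ∂μ := by
  have hu₀ := hu.continuous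
  have hdist (t : ℝ) : Continuous fun x ↦ Euclidean.dist (x + t • u x) y :=
    continuous_euclideanDist (by fun_prop) continuous_const
  refine integral_eq_of_infinite_of_polynomial
    (fun x ↦ exists_polynomial_eval_eq_det_mul_eval_euclideanDist (fderiv ℝ u x) x (u x) y p)
    (fun t ↦ ?_) ?_ t
  · exact ((continuous_det_id_add_smul_fderiv hu t).mul
      (p.continuous.comp ((hdist t).pow 2))).continuousOn.integrableOn_compact hB
  · exact infinite_of_mem_nhds 0 (eventually_setIntegral_det_smul_comp_id_add_smul μ hu hc
      hB.measurableSet huB fun x ↦ p.eval (Euclidean.dist x y ^ 2))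

theorem setIntegral_det_mul_comp_euclideanDist (hu : ContDiff ℝ 1 u) (hc : HasCompactSupport u)
    (hB : IsCompact B) (huB : ∀ x ∉ B, u x = 0) (y : E) {q : ℝ → ℝ} (hq : Continuous q) :
    ∫ x in B, (ContinuousLinearMap.id ℝ E + fderiv ℝ u x).det *
        q (Euclidean.dist (x + u x) y ^ 2) ∂μ
      = ∫ x in B, q (Euclidean.dist x y ^ 2) ∂μ := by
  have hdet := continuous_det_id_add_smul_fderiv hu 1
  have hdist : Continuous fun x ↦ Euclidean.dist (x + u x) y :=
    continuous_euclideanDist (continuous_id.add hu.continuous) continuous_const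
  have hdist₀ : Continuous fun x ↦ Euclidean.dist x y :=
    continuous_euclideanDist continuous_id continuous_const
  have hpoly (p : ℝ[X]) := setIntegral_det_mul_eval_euclideanDist μ hu hc hB huB y p 1
  simp only [one_smul] at hdet hpoly
  have h := setIntegral_mul_comp_eq_of_forall_polynomial (b := fun _ ↦ 1) hB hB.measurableSet
    hdet.continuousOn continuousOn_const (hdist.pow 2).continuousOn (hdist₀.pow 2).continuousOn
    (by simpa only [one_mul, Pi.pow_apply] using hpoly) hq
  simpa only [one_mul, Pi.pow_apply] using h

end AveragingIdentity

theorem setIntegral_pos_of_mem_interior {X : Type*} [TopologicalSpace X] [T2Space X]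
    [MeasurableSpace X] [BorelSpace X] {μ : Measure X} [μ.IsOpenPosMeasure]
    [IsFiniteMeasureOnCompacts μ] {B : Set X} (hB : IsCompact B) {f : X → ℝ} (hf : Continuous f)
    (hnonneg : 0 ≤ f) {y : X} (hy : y ∈ interior B) (hfy : f y ≠ 0) :
    0 < ∫ x in B, f x ∂μ := by
  rw [setIntegral_pos_iff_support_of_nonneg_ae (.of_forall hnonneg)
    (hf.continuousOn.integrableOn_compact hB)]
  exact ((hf.isOpen_support.inter isOpen_interior).measure_pos μ ⟨y, hfy, hy⟩).trans_le
    (measure_mono (inter_subset_inter_right _ interior_subset))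

section Surjectivity

variable {E : Type*} [NormedAddCommGroup E] [NormedSpace ℝ E] [FiniteDimensional ℝ E] {u : E → E}

theorem surjective_id_add_of_contDiff (hu : ContDiff ℝ 1 u) (hc : HasCompactSupport u) :
    Surjective fun x ↦ x + u x := by
  intro y
  by_contra! hmiss
  borelize E
  let μ : Measure E := Measure.addHaar
  obtain ⟨B, hB, hsub⟩ := exists_compact_superset (hc.isCompact.insert y)
  have hyB : y ∈ interior B := hsub (mem_insert _ _)
  have huB (x) (hx : x ∉ B) : u x = 0 := image_eq_zero_of_notMem_tsupport fun hxu ↦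
    hx (interior_subset (hsub (mem_insert_of_mem _ hxu)))
  obtain ⟨δ, hδ, hδB⟩ : ∃ δ > 0, ∀ x ∈ B, δ ≤ Euclidean.dist (x + u x) y ^ 2 := by
    have hcont : Continuous fun x ↦ Euclidean.dist (x + u x) y :=
      continuous_euclideanDist (continuous_id.add hu.continuous) continuous_const
    obtain ⟨x₀, -, hmin⟩ := hB.exists_isMinOn ⟨y, interior_subset hyB⟩ (hcont.pow 2).continuousOn
    exact ⟨_, pow_pos (dist_pos.2 (toEuclidean.injective.ne (hmiss x₀))) 2, hmin⟩
  let q : ℝ → ℝ := fun s ↦ max 0 (δ - s)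
  have hq : Continuous q := by fun_prop
  have hdist : Continuous fun x ↦ Euclidean.dist x y :=
    continuous_euclideanDist continuous_id continuous_const
  have hbump : Continuous fun x ↦ q (Euclidean.dist x y ^ 2) := hq.comp (hdist.pow 2)
  have hzero : ∫ x in B, q (Euclidean.dist x y ^ 2) ∂μ = 0 := by
    rw [← setIntegral_det_mul_comp_euclideanDist μ hu hc hB huB y hq]
    refine setIntegral_eq_zero_of_forall_eq_zero fun x hx ↦ ?_
    rw [show q _ = 0 from max_eq_left (sub_nonpos.2 (hδB x hx)), mul_zero]
  have hpos : 0 < ∫ x in B, q (Euclidean.dist x y ^ 2) ∂μ :=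
    setIntegral_pos_of_mem_interior hB hbump (fun _ ↦ le_max_left _ _) hyB
      (by simp [q, Euclidean.dist, hδ])
  exact hpos.ne' hzero

theorem surjective_id_add_of_hasCompactSupport (hu : Continuous u) (hc : HasCompactSupport u) :
    Surjective fun x ↦ x + u x := by
  intro y
  by_contra! hmiss
  obtain ⟨w, hw, hwu, hsupp⟩ := hu.exists_contDiff_approx 1 (ε := fun x ↦ dist (x + u x) y)
    (by fun_prop) fun x ↦ dist_pos.2 (hmiss x)
  obtain ⟨x, rfl⟩ := surjective_id_add_of_contDiff hw (hc.mono hsupp) y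
  refine (hwu x).ne ?_
  rw [dist_add_left, dist_comm]

theorem exists_eq_of_dist_lt_on_frontier {K : Set E} (hK : IsCompact K) {y : E} (hy : y ∈ K)
    {h : E → E} (hh : Continuous h) (hclose : ∀ x ∈ frontier K, dist (h x) x < dist x y) :
    ∃ x ∈ K, h x = y := by
  let U : Set E := interior K ∪ {x | dist (h x) x < dist x y}
  have hU : IsOpen U := isOpen_interior.union (isOpen_lt (by fun_prop) (by fun_prop))
  have hKU : K ⊆ U := fun x hx ↦ (em (x ∈ interior K)).imp_right fun hxi ↦
    hclose x ⟨subset_closure hx, hxi⟩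
  obtain ⟨χ, hχ1, hχ0, hχc, hχ⟩ := exists_continuous_one_zero_of_isCompact hK hU.isClosed_compl
    (disjoint_compl_right_iff_subset.2 hKU)
  obtain ⟨x, hx⟩ := surjective_id_add_of_hasCompactSupport (u := fun x ↦ χ x • (h x - x))
    (by fun_prop) hχc.smul_right y
  simp only at hx
  by_cases hxK : x ∈ K
  · exact ⟨x, hxK, by simpa [hχ1 hxK] using hx⟩
  have hdist : dist x y = χ x * dist (h x) x := by
    rw [← hx, dist_self_add_right, norm_smul, Real.norm_of_nonneg (hχ x).1, dist_eq_norm]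
  have hle : dist x y ≤ dist (h x) x :=
    hdist.trans_le (mul_le_of_le_one_left dist_nonneg (hχ x).2)
  have hxU : x ∉ U := by
    rintro (hxi | hlt)
    · exact hxK (interior_subset hxi)
    · exact hle.not_gt hlt
  have hxy : x = y := by rw [← dist_eq_zero, hdist, hχ0 hxU, Pi.zero_apply, zero_mul]
  exact absurd (hxy ▸ hy) hxK

end Surjectivity

section Embedding

universe u v

theorem exists_continuous_leftInvOn_of_injOn {X : Type u} {Y : Type v} [TopologicalSpace X]
    [NormalSpace X] [T2Space X] [TietzeExtension.{v, u} X] [TopologicalSpace Y] [NormalSpace Y]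
    [T2Space Y] [TietzeExtension.{u, v} Y] {S : Set X} (hS : IsCompact S) {f : X → Y}
    (hf : ContinuousOn f S) (hinj : InjOn f S) :
    ∃ (F : C(X, Y)) (G : C(Y, X)), EqOn F f S ∧ LeftInvOn G F S := by
  have := isCompact_iff_compactSpace.1 hS
  let fS : C(S, Y) := ⟨S.domRestrict f, hf.domRestrict⟩
  have hfS : IsClosedEmbedding fS := fS.continuous.isClosedEmbedding hinj.injective
  obtain ⟨F, hF⟩ := fS.exists_restrict_eq hS.isClosed
  obtain ⟨G, hG⟩ := ContinuousMap.exists_extension' hfS ⟨Subtype.val, continuous_subtype_val⟩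
  have hFf : EqOn F f S := fun x hx ↦ congr($hF ⟨x, hx⟩)
  exact ⟨F, G, hFf, fun x hx ↦ by rw [hFf hx]; exact congrFun hG ⟨x, hx⟩⟩

variable {E F : Type*} [NormedAddCommGroup E] [NormedSpace ℝ E] [FiniteDimensional ℝ E]
  [NormedAddCommGroup F] [NormedSpace ℝ F] [FiniteDimensional ℝ F]

theorem exists_continuous_dist_lt_forall_ne (hdim : finrank ℝ F < finrank ℝ E) {G : F → E}
    (hG : Continuous G) (y : E) {ε : ℝ} (hε : 0 < ε) :
    ∃ h : F → E, Continuous h ∧ (∀ z, dist (h z) (G z) < ε) ∧ ∀ z, h z ≠ y := by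
  obtain ⟨g, hg, hgG, -⟩ := hG.exists_contDiff_approx 1 (ε := fun _ ↦ ε / 2) continuous_const
    fun _ ↦ half_pos hε
  obtain ⟨c, hc, hyc⟩ :=
    (hg.dense_compl_range_of_finrank_lt_finrank hdim).exists_dist_lt y (half_pos hε)
  refine ⟨fun z ↦ g z + (y - c), by have := hg.continuous; fun_prop, fun z ↦ ?_, fun z hz ↦ ?_⟩
  · calc dist (g z + (y - c)) (G z)
        ≤ dist (g z + (y - c)) (g z) + dist (g z) (G z) := dist_triangle _ _ _
      _ < ε / 2 + ε / 2 := add_lt_add (by rwa [dist_self_add_left, ← dist_eq_norm]) (hgG z)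
      _ = ε := add_halves ε
  · exact hc ⟨z, by simpa [add_sub, sub_eq_iff_eq_add, add_comm] using hz⟩

theorem sphere_map_not_injective_general (hdim : finrank ℝ F < finrank ℝ E) {K : Set E}
    (hK : IsCompact K) (hKi : (interior K).Nonempty) {f : E → F}
    (hf : ContinuousOn f (frontier K)) :
    ∃ x ∈ frontier K, ∃ y ∈ frontier K, x ≠ y ∧ f x = f y := by
  suffices ¬ InjOn f (frontier K) by
    simpa only [InjOn, not_forall, exists_prop, and_comm, ne_eq] using this
  intro hinj
  obtain ⟨c, hc⟩ := hKi
  obtain ⟨r, hr, hball⟩ := isOpen_iff.1 isOpen_interior c hc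
  obtain ⟨f', G, -, hGf⟩ := exists_continuous_leftInvOn_of_injOn
    (hK.of_isClosed_subset isClosed_frontier hK.isClosed.frontier_subset) hf hinj
  obtain ⟨h, hh, hhG, hhc⟩ := exists_continuous_dist_lt_forall_ne hdim G.continuous c hr
  obtain ⟨x, -, hx⟩ := exists_eq_of_dist_lt_on_frontier hK (interior_subset hc)
    (hh.comp f'.continuous) fun x hx ↦ by
      have hrx : r ≤ dist x c := not_lt.1 fun hxc ↦ hx.2 (hball hxc)
      exact (hGf hx ▸ hhG (f' x)).trans_le hrx
  exact hhc _ hx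

end Embedding

/-- For `n ≥ 1`, a continuous map `f : S^n → ℝ^n` is not injective: there exist
distinct points `x ≠ y` on the sphere with `f x = f y`. -/
theorem sphere_map_not_injective (n : ℕ) (hn : 1 ≤ n)
    (f : EuclideanSpace ℝ (Fin (n + 1)) → EuclideanSpace ℝ (Fin n))
    (hf : ContinuousOn f (Metric.sphere (0 : EuclideanSpace ℝ (Fin (n + 1))) 1)) :
    ∃ x ∈ Metric.sphere (0 : EuclideanSpace ℝ (Fin (n + 1))) 1,
      ∃ y ∈ Metric.sphere (0 : EuclideanSpace ℝ (Fin (n + 1))) 1,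
        x ≠ y ∧ f x = f y := by
  rw [← frontier_closedBall _ one_ne_zero] at hf ⊢
  exact sphere_map_not_injective_general (by simp) (isCompact_closedBall 0 1)
    ⟨0, ball_subset_interior_closedBall (mem_ball_self one_pos)⟩ hf
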